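/- The first integral simplicial homology group of the 11-vertex flag triangulation of ℝP² (the complex Δ(G) of Figure 5) is isomorphic to ℤ/2ℤ. -/

import Mathlib

namespace SC

variable (R : Type) [CommRing R] {V : Type} [Fintype V] [LinearOrder V]

/-- The simplicial boundary operator on the free module on all subsets of `V`
(the empty set playing the role of the `(-1)`-simplex, so this is the augmented
simplicial chain complex; faces are ordered by the linear order on `V`). -/
noncomputable def bd : (Finset V → R) →ₗ[R] (Finset V → R) :=
  ∑ σ : Finset V, (LinearMap.proj σ).smulRight
    (∑ x ∈ σ, ((-1 : R) ^ ((σ.filter fun y => y < x).card)) • (Pi.single (σ.erase x) (1 : R) : Finset V → R))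

/-- The `d`-dimensional faces of `Δ` (faces with `d+1` vertices). -/
def Faces (Δ : Finset (Finset V)) (d : ℕ) : Finset (Finset V) :=
  Δ.filter fun s => s.card = d + 1

/-- `Δ` is an (abstract) simplicial complex: it is downward closed. -/
def IsComplex (Δ : Finset (Finset V)) : Prop := ∀ s ∈ Δ, ∀ t ⊆ s, t ∈ Δ

/-- The module of simplicial `d`-chains of `Δ`: the span of the `d`-faces. -/
noncomputable def faceSpan (Δ : Finset (Finset V)) (d : ℕ) : Submodule R (Finset V → R) :=
  Submodule.span R ((fun s => (Pi.single s (1 : R) : Finset V → R)) '' (Faces Δ d : Set (Finset V)))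

/-- Reduced `d`-cycles of `Δ`. -/
noncomputable def cycles (Δ : Finset (Finset V)) (d : ℕ) : Submodule R (Finset V → R) :=
  faceSpan R Δ d ⊓ LinearMap.ker (bd R)

/-- `d`-boundaries of `Δ`. -/
noncomputable def boundaries (Δ : Finset (Finset V)) (d : ℕ) : Submodule R (Finset V → R) :=
  Submodule.map (bd R) (faceSpan R Δ (d + 1))

/-- Reduced simplicial homology of `Δ` in degree `d`, with coefficients in `R`. -/
noncomputable def Homology (Δ : Finset (Finset V)) (d : ℕ) : Type :=
  ↥(cycles R Δ d) ⧸ ((boundaries R Δ d ⊓ cycles R Δ d).comap (cycles R Δ d).subtype)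

noncomputable instance (Δ : Finset (Finset V)) (d : ℕ) : AddCommGroup (Homology R Δ d) :=
  inferInstanceAs (AddCommGroup
    (↥(cycles R Δ d) ⧸ ((boundaries R Δ d ⊓ cycles R Δ d).comap (cycles R Δ d).subtype)))

noncomputable instance (Δ : Finset (Finset V)) (d : ℕ) : Module R (Homology R Δ d) :=
  inferInstanceAs (Module R
    (↥(cycles R Δ d) ⧸ ((boundaries R Δ d ⊓ cycles R Δ d).comap (cycles R Δ d).subtype)))

/-- The induced subcomplex of `Δ` on a vertex subset `α`. -/
def restrict (Δ : Finset (Finset V)) (α : Finset V) : Finset (Finset V) :=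
  Δ.filter fun s => s ⊆ α

/-- Graded Betti numbers of the Stanley–Reisner ring of `Δ` over `k`,
defined via Hochster's formula. -/
noncomputable def betti (k : Type) [CommRing k] (Δ : Finset (Finset V)) (i j : ℕ) : ℕ :=
  ∑ α ∈ (Finset.univ : Finset V).powersetCard j,
    Module.finrank k (Homology k (restrict Δ α) (j - i - 1))

/-- The 11-vertex minimal flag triangulation of the real projective plane of Figure 5
of the paper (vertices `v_1, …, v_11` renamed `0, …, 10`): the simplicial complex
with 11 vertices, 30 edges and 20 triangles. -/
def rpTwoComplex : Finset (Finset (Fin 11)) :=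
  {∅,
   {0},
   {1},
   {2},
   {3},
   {4},
   {5},
   {6},
   {7},
   {8},
   {9},
   {10},
   {0, 1},
   {0, 7},
   {1, 2},
   {1, 8},
   {2, 8},
   {2, 9},
   {8, 9},
   {0, 8},
   {9, 10},
   {8, 10},
   {7, 8},
   {7, 10},
   {1, 5},
   {0, 5},
   {4, 9},
   {4, 10},
   {0, 4},
   {4, 5},
   {5, 10},
   {3, 4},
   {0, 3},
   {3, 7},
   {5, 6},
   {6, 10},
   {6, 7},
   {3, 6},
   {3, 9},
   {1, 6},
   {2, 3},
   {2, 6},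
   {1, 2, 8},
   {2, 8, 9},
   {0, 1, 8},
   {8, 9, 10},
   {0, 7, 8},
   {7, 8, 10},
   {0, 1, 5},
   {4, 9, 10},
   {0, 4, 5},
   {4, 5, 10},
   {0, 3, 4},
   {0, 3, 7},
   {5, 6, 10},
   {6, 7, 10},
   {3, 6, 7},
   {3, 4, 9},
   {1, 5, 6},
   {2, 3, 9},
   {1, 2, 6},
   {2, 3, 6}}

theorem bd_single (σ : Finset V) :
    bd R (Pi.single σ 1) = ∑ x ∈ σ, ((-1 : R) ^ ((σ.filter fun y => y < x).card)) •
      (Pi.single (σ.erase x) (1 : R) : Finset V → R) := by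
  rw [bd, LinearMap.sum_apply, Finset.sum_eq_single σ]
  · simp
  · intro τ _ hτ
    simp [hτ]
  · simp

theorem bd_single_edge {a b : V} (h : a < b) :
    bd R (Pi.single {a, b} 1) = Pi.single {b} 1 - Pi.single {a} 1 := by
  have hb : ({a, b} : Finset V).erase b = {a} := by grind
  have ha : ({a, b} : Finset V).erase a = {b} := by grind
  rw [bd_single, Finset.sum_pair h.ne, ha, hb]
  simp [Finset.filter_insert, Finset.filter_singleton, h, h.not_gt]
  abel

theorem bd_single_triangle {a b c : V} (hab : a < b) (hbc : b < c) :
    bd R (Pi.single {a, b, c} 1) =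
      Pi.single {b, c} 1 - Pi.single {a, c} 1 + Pi.single {a, b} 1 := by
  have hac := hab.trans hbc
  have hc : ({a, b, c} : Finset V).erase c = {a, b} := by grind
  have hb : ({a, b, c} : Finset V).erase b = {a, c} := by grind
  have ha : ({a, b, c} : Finset V).erase a = {b, c} := by grind
  rw [bd_single, Finset.sum_insert (by grind), Finset.sum_pair hbc.ne, ha, hb, hc]
  simp [Finset.filter_insert, Finset.filter_singleton, hab, hbc, hac, hab.not_gt, hbc.not_gt,
    hac.not_gt, hab.ne]
  abel

/-- The chain of the edge `{a, b}`, oriented from the smaller to the larger vertex. -/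
def edgeChain (a b : Fin 11) : Finset (Fin 11) → ℤ := Pi.single {a, b} 1

theorem bd_edgeChain {a b : Fin 11} (h : a < b) :
    bd ℤ (edgeChain a b) = Pi.single {b} 1 - Pi.single {a} 1 := by
  unfold edgeChain
  convert bd_single_edge ℤ h

theorem bd_single_three {a b c : Fin 11} (hab : a < b) (hbc : b < c) :
    bd ℤ (Pi.single {a, b, c} 1) = edgeChain b c - edgeChain a c + edgeChain a b := by
  unfold edgeChain
  convert bd_single_triangle ℤ hab hbc

/-- For each vertex `v`, a chain of edges with boundary `v - 8`, along a fixed spanning tree. -/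
def treePath : Fin 11 → Finset (Fin 11) → ℤ :=
  ![-edgeChain 0 8, -edgeChain 1 8, -edgeChain 2 8, edgeChain 8 9 - edgeChain 3 9,
    edgeChain 8 9 - edgeChain 4 9, edgeChain 0 5 - edgeChain 0 8, edgeChain 1 6 - edgeChain 1 8,
    -edgeChain 7 8, 0, edgeChain 8 9, edgeChain 8 10]

/-- A one-sided closed curve in the projective plane. -/
def oneSidedLoop : Finset (Fin 11) → ℤ :=
  edgeChain 0 3 + edgeChain 3 9 - edgeChain 8 9 - edgeChain 0 8

/-- The support of a cocycle modulo `2` that is not a coboundary. -/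
def cutEdges : Finset (Finset (Fin 11)) :=
  {{0, 3}, {0, 4}, {3, 7}, {4, 5}, {5, 10}, {6, 7}, {6, 10}}

/-- The sum of the coefficients of a chain on `cutEdges`. -/
noncomputable def cutSum : (Finset (Fin 11) → ℤ) →ₗ[ℤ] ℤ := ∑ s ∈ cutEdges, LinearMap.proj s

/-- The linear extension of `treePath` to chains of vertices. -/
noncomputable def treeMap : (Finset (Fin 11) → ℤ) →ₗ[ℤ] (Finset (Fin 11) → ℤ) :=
  ∑ v, (LinearMap.proj {v}).smulRight (treePath v)

theorem treeMap_single (v : Fin 11) : treeMap (Pi.single {v} 1) = treePath v := by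
  rw [treeMap, LinearMap.sum_apply, Finset.sum_eq_single v]
  · simp
  · intro w _ hw
    simp [hw]
  · simp

theorem cutSum_single (s : Finset (Fin 11)) :
    cutSum (Pi.single s 1) = if s ∈ cutEdges then 1 else 0 := by
  simp [cutSum, Pi.single_apply]

/-- The edges of `rpTwoComplex`, each given by its smaller and its larger vertex. -/
def edgeList : List (Fin 11 × Fin 11) :=
  [(0, 1), (0, 3), (0, 4), (0, 5), (0, 7), (0, 8), (1, 2), (1, 5), (1, 6), (1, 8), (2, 3),
    (2, 6), (2, 8), (2, 9), (3, 4), (3, 6), (3, 7), (3, 9), (4, 5), (4, 9), (4, 10), (5, 6),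
    (5, 10), (6, 7), (6, 10), (7, 8), (7, 10), (8, 9), (8, 10), (9, 10)]

theorem lt_of_mem_edgeList : ∀ p ∈ edgeList, p.1 < p.2 := by
  decide +kernel

theorem exists_edge_of_mem_faces :
    ∀ s ∈ Faces rpTwoComplex 1, ∃ p ∈ edgeList, s = {p.1, p.2} := by
  have key : ∀ s ∈ rpTwoComplex, s.card = 1 + 1 → ∃ p ∈ edgeList, s = {p.1, p.2} := by
    simp only [rpTwoComplex, Finset.forall_mem_insert, Finset.mem_singleton, forall_eq]
    repeat' apply And.intro
    all_goals decide +kernel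
  intro s hs
  exact key s (Finset.mem_filter.1 hs).1 (Finset.mem_filter.1 hs).2

theorem mem_cutEdges_iff : ∀ p ∈ edgeList, {p.1, p.2} ∈ cutEdges ↔
    p ∈ [(0, 3), (0, 4), (3, 7), (4, 5), (5, 10), (6, 7), (6, 10)] := by
  decide +kernel

/-- The triangles of `rpTwoComplex`, each given by its vertices in increasing order. -/
def triangleList : List (Fin 11 × Fin 11 × Fin 11) :=
  [(1, 2, 8), (2, 8, 9), (0, 1, 8), (8, 9, 10), (0, 7, 8), (7, 8, 10), (0, 1, 5),
    (4, 9, 10), (0, 4, 5), (4, 5, 10), (0, 3, 4), (0, 3, 7), (5, 6, 10), (6, 7, 10),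
    (3, 6, 7), (3, 4, 9), (1, 5, 6), (2, 3, 9), (1, 2, 6), (2, 3, 6)]

theorem mem_of_mem_triangleList : ∀ t ∈ triangleList,
    t.1 < t.2.1 ∧ t.2.1 < t.2.2 ∧ {t.1, t.2.1, t.2.2} ∈ rpTwoComplex := by
  decide +kernel

theorem mk_triangle : ∀ t ∈ triangleList,
    (boundaries ℤ rpTwoComplex 1).mkQ (edgeChain t.2.1 t.2.2) -
      (boundaries ℤ rpTwoComplex 1).mkQ (edgeChain t.1 t.2.2) +
      (boundaries ℤ rpTwoComplex 1).mkQ (edgeChain t.1 t.2.1) = 0 := by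
  rintro ⟨a, b, c⟩ ht
  obtain ⟨hab, hbc, hmem⟩ := mem_of_mem_triangleList _ ht
  rw [← map_sub, ← map_add, Submodule.mkQ_apply, Submodule.Quotient.mk_eq_zero]
  refine ⟨Pi.single {a, b, c} 1, Submodule.subset_span ⟨{a, b, c}, ?_, rfl⟩,
    bd_single_three hab hbc⟩
  simp only [Faces, Finset.coe_filter, Set.mem_ofPred_eq]
  exact ⟨hmem, Finset.card_eq_three.2 ⟨a, b, c, hab.ne, (hab.trans hbc).ne, hbc.ne, rfl⟩⟩

theorem mk_edgeChain : (2 : ℤ) • (boundaries ℤ rpTwoComplex 1).mkQ oneSidedLoop = 0 ∧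
    ∀ p ∈ edgeList, (boundaries ℤ rpTwoComplex 1).mkQ (edgeChain p.1 p.2) =
      (boundaries ℤ rpTwoComplex 1).mkQ (treePath p.2) -
        (boundaries ℤ rpTwoComplex 1).mkQ (treePath p.1) +
      (if {p.1, p.2} ∈ cutEdges then 1 else 0 : ℤ) •
        (boundaries ℤ rpTwoComplex 1).mkQ oneSidedLoop := by
  have htri := mk_triangle
  simp only [triangleList, List.forall_mem_cons] at htri
  have hloop : (2 : ℤ) • (boundaries ℤ rpTwoComplex 1).mkQ oneSidedLoop = 0 := by
    simp only [oneSidedLoop, map_sub, map_add]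
    grind
  refine ⟨hloop, ?_⟩
  intro p hp
  simp only [mem_cutEdges_iff p hp]
  simp only [oneSidedLoop, map_sub, map_add] at hloop ⊢
  fin_cases hp <;> simp [treePath, -Submodule.mkQ_apply] <;> grind

theorem mk_eq_of_mem_faceSpan {c : Finset (Fin 11) → ℤ} (hc : c ∈ faceSpan ℤ rpTwoComplex 1) :
    (boundaries ℤ rpTwoComplex 1).mkQ c = (boundaries ℤ rpTwoComplex 1).mkQ (treeMap (bd ℤ c)) +
      cutSum c • (boundaries ℤ rpTwoComplex 1).mkQ oneSidedLoop := by
  induction hc using Submodule.span_induction with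
  | mem x hx =>
    obtain ⟨s, hs, hx⟩ := hx
    obtain ⟨⟨a, b⟩, hp, rfl⟩ := exists_edge_of_mem_faces s hs
    have hab : a < b := lt_of_mem_edgeList _ hp
    obtain rfl : edgeChain a b = x := hx
    rw [mk_edgeChain.2 _ hp, bd_edgeChain hab, map_sub, map_sub, treeMap_single, treeMap_single,
      edgeChain, cutSum_single]
  | zero => simp
  | add x y _ _ hx hy =>
    simp only [map_add, add_smul, hx, hy]
    abel
  | smul a x _ hx => simp only [map_smul, hx, smul_add, smul_assoc]

theorem cutSum_bd_even {x : Finset (Fin 11) → ℤ} (hx : x ∈ faceSpan ℤ rpTwoComplex 2) :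
    (cutSum (bd ℤ x) : ZMod 2) = 0 := by
  have key : ∀ s ∈ rpTwoComplex, s.card = 2 + 1 →
      ∑ x ∈ s, (if s.erase x ∈ cutEdges then 1 else 0 : ZMod 2) = 0 := by
    simp only [rpTwoComplex, Finset.forall_mem_insert, Finset.mem_singleton, forall_eq]
    repeat' apply And.intro
    all_goals decide +kernel
  induction hx using Submodule.span_induction with
  | mem x hx =>
    obtain ⟨s, hs, rfl⟩ := hx
    rw [← key s (Finset.mem_filter.1 hs).1 (Finset.mem_filter.1 hs).2]
    simp only [bd_single, map_sum, map_smul, cutSum_single, Int.cast_sum, smul_eq_mul,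
      Int.cast_mul, Int.cast_pow, Int.cast_neg, Int.cast_one, ZModModule.neg_eq_self, one_pow,
      one_mul, Int.cast_ite, Int.cast_zero]
  | zero => simp
  | add x y _ _ hx hy => simp [hx, hy]
  | smul a x _ hx => rw [map_smul, map_smul, smul_eq_mul, Int.cast_mul, hx, mul_zero]

theorem edgeChain_mem_faceSpan {a b : Fin 11} (h : {a, b} ∈ Faces rpTwoComplex 1) :
    edgeChain a b ∈ faceSpan ℤ rpTwoComplex 1 :=
  Submodule.subset_span ⟨_, h, rfl⟩

theorem oneSidedLoop_mem_cycles : oneSidedLoop ∈ cycles ℤ rpTwoComplex 1 := by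
  refine ⟨?_, ?_⟩
  · exact sub_mem (sub_mem (add_mem (edgeChain_mem_faceSpan (by decide +kernel))
      (edgeChain_mem_faceSpan (by decide +kernel))) (edgeChain_mem_faceSpan (by decide +kernel)))
      (edgeChain_mem_faceSpan (by decide +kernel))
  · change bd ℤ oneSidedLoop = 0
    rw [oneSidedLoop, map_sub, map_sub, map_add, bd_edgeChain (by decide),
      bd_edgeChain (by decide), bd_edgeChain (by decide), bd_edgeChain (by decide)]
    abel

theorem cutSum_oneSidedLoop : cutSum oneSidedLoop = 1 := by
  simp only [oneSidedLoop, edgeChain, map_sub, map_add, cutSum_single]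
  decide

theorem mem_boundaries_of_cutSum {c : Finset (Fin 11) → ℤ} (hc : c ∈ cycles ℤ rpTwoComplex 1)
    (h : (cutSum c : ZMod 2) = 0) : c ∈ boundaries ℤ rpTwoComplex 1 := by
  obtain ⟨m, hm⟩ := (ZMod.intCast_zmod_eq_zero_iff_dvd _ 2).1 h
  rw [← Submodule.Quotient.mk_eq_zero, ← Submodule.mkQ_apply, mk_eq_of_mem_faceSpan hc.1,
    LinearMap.mem_ker.1 hc.2, hm, mul_comm, mul_smul,
    Nat.cast_ofNat, mk_edgeChain.1, smul_zero, map_zero, map_zero, add_zero]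

/-- The first integral simplicial homology group of the 11-vertex flag triangulation
of `ℝP²` is `ℤ/2ℤ`. -/
theorem rpTwoComplex_homology_one : Nonempty (Homology ℤ rpTwoComplex 1 ≃+ ZMod 2) := by
  let φ : cycles ℤ rpTwoComplex 1 →+ ZMod 2 :=
    (Int.castAddHom (ZMod 2)).comp (cutSum.comp (cycles ℤ rpTwoComplex 1).subtype).toAddMonoidHom
  have hφ : Function.Surjective φ := fun z => by
    refine ⟨(z.val : ℤ) • ⟨oneSidedLoop, oneSidedLoop_mem_cycles⟩, ?_⟩
    change ((cutSum ((z.val : ℤ) • oneSidedLoop) : ℤ) : ZMod 2) = z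
    rw [map_smul, cutSum_oneSidedLoop]
    simp
  have hker : ((boundaries ℤ rpTwoComplex 1 ⊓ cycles ℤ rpTwoComplex 1).comap
      (cycles ℤ rpTwoComplex 1).subtype).toAddSubgroup = φ.ker := by
    ext c
    constructor
    · rintro ⟨⟨x, hx, hxc⟩, -⟩
      have := cutSum_bd_even hx
      rw [hxc] at this
      exact this
    · exact fun hc => ⟨mem_boundaries_of_cutSum c.2 hc, c.2⟩
  exact ⟨(QuotientAddGroup.quotientAddEquivOfEq hker).trans
    (QuotientAddGroup.quotientKerEquivOfSurjective φ hφ)⟩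

end SC
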